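/- arXiv:0801.0711 — 4 statements merged into one kernel-verified Lean document; each statement's English description precedes it below -/
import Mathlib

section
/- For every integer k ≥ 1 one has the identity f_k = (1/(k·(−2)^{k−1}))·Σ_{q=0}^{⌊k/2⌋} (−1)^q·C(k,2q)·t^{k−2q}·u^q in ℚ[s,t], where u := 4s − t². -/
open MvPolynomial

/-- The variable `s` (weight 2). -/
noncomputable def s : MvPolynomial (Fin 2) ℚ := X 0
/-- The variable `t` (weight 1). -/
noncomputable def t : MvPolynomial (Fin 2) ℚ := X 1
/-- `u := 4s - t²`. -/
noncomputable def u : MvPolynomial (Fin 2) ℚ := C 4 * s - t ^ 2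

/-- `f k` is the weighted-degree-`k` homogeneous part of `log (1+s+t)`, where `s` has
weight 2 and `t` weight 1:
`f k = ∑_{2a+b = k, a+b ≥ 1} ((-1)^(a+b-1)/(a+b)) ⬝ C(a+b,a) ⬝ s^a t^b`. -/
noncomputable def f (k : ℕ) : MvPolynomial (Fin 2) ℚ :=
  ∑ a ∈ Finset.range (k / 2 + 1),
    C (((-1 : ℚ) ^ (k - a - 1) / (k - a : ℚ)) * ((k - a).choose a : ℚ)) *
      s ^ a * t ^ (k - 2 * a)

/-- Fibonacci-type polynomial. -/
def auxG {R : Type*} [CommRing R] (x y : R) (n : ℕ) : R :=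
  ∑ a ∈ Finset.range (n / 2 + 1), ((n - a).choose a : R) * y ^ a * x ^ (n - 2 * a)

theorem auxG_ext {R : Type*} [CommRing R] (x y : R) (n N : ℕ) (h : n / 2 + 1 ≤ N) :
    auxG x y n = ∑ a ∈ Finset.range N, ((n - a).choose a : R) * y ^ a * x ^ (n - 2 * a) := by
  unfold auxG
  apply Finset.sum_subset
  · intro a ha
    simp only [Finset.mem_range] at *
    omega
  · intro a _ ha
    simp only [Finset.mem_range] at ha
    rw [Nat.choose_eq_zero_of_lt (by omega)]
    simp

theorem auxG_rec {R : Type*} [CommRing R] (x y : R) (n : ℕ) :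
    auxG x y (n + 2) = x * auxG x y (n + 1) + y * auxG x y n := by
  rw [auxG_ext x y (n + 2) (n / 2 + 1 + 1) (by omega),
    auxG_ext x y (n + 1) (n / 2 + 1 + 1) (by omega), auxG, Finset.sum_range_succ' _ (n / 2 + 1),
    Finset.sum_range_succ' _ (n / 2 + 1), mul_add x, Finset.mul_sum, Finset.mul_sum, add_right_comm,
    ← Finset.sum_add_distrib]
  congr 1
  · apply Finset.sum_congr rfl
    intro a ha
    simp only [Finset.mem_range] at ha
    have e1 : n + 2 - (a + 1) = (n - a) + 1 := by omega
    have e2 : n + 1 - (a + 1) = n - a := by omega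
    have e3 : n + 2 - 2 * (a + 1) = n - 2 * a := by omega
    rw [e1, e2, e3, Nat.choose_succ_succ]
    by_cases h : 2 * a + 1 ≤ n
    · have e4 : n - 2 * a = (n + 1 - 2 * (a + 1)) + 1 := by omega
      rw [e4]
      push_cast
      ring
    · rw [Nat.choose_eq_zero_of_lt (show n - a < a + 1 by omega)]
      push_cast
      ring
  · simp
    ring

/-- Even part of the binomial expansion. -/
def auxA {R : Type*} [CommRing R] (t d : R) (n : ℕ) : R :=
  ∑ q ∈ Finset.range (n / 2 + 1), (n.choose (2 * q) : R) * t ^ (n - 2 * q) * d ^ q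

/-- Odd part of the binomial expansion. -/
def auxB {R : Type*} [CommRing R] (t d : R) (n : ℕ) : R :=
  ∑ q ∈ Finset.range (n / 2 + 1), (n.choose (2 * q + 1) : R) * t ^ (n - (2 * q + 1)) * d ^ q

theorem auxA_ext {R : Type*} [CommRing R] (t d : R) (n N : ℕ) (h : n / 2 + 1 ≤ N) :
    auxA t d n = ∑ q ∈ Finset.range N, (n.choose (2 * q) : R) * t ^ (n - 2 * q) * d ^ q := by
  unfold auxA
  apply Finset.sum_subset
  · intro a ha
    simp only [Finset.mem_range] at *
    omega
  · intro a _ ha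
    simp only [Finset.mem_range] at ha
    rw [Nat.choose_eq_zero_of_lt (by omega)]
    simp

theorem auxB_ext {R : Type*} [CommRing R] (t d : R) (n N : ℕ) (h : n / 2 + 1 ≤ N) :
    auxB t d n =
      ∑ q ∈ Finset.range N, (n.choose (2 * q + 1) : R) * t ^ (n - (2 * q + 1)) * d ^ q := by
  unfold auxB
  apply Finset.sum_subset
  · intro a ha
    simp only [Finset.mem_range] at *
    omega
  · intro a _ ha
    simp only [Finset.mem_range] at ha
    rw [Nat.choose_eq_zero_of_lt (by omega)]
    simp

theorem aux_choose_mul {R : Type*} [CommRing R] (t : R) (n j : ℕ) :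
    ((n + 1).choose (j + 1) : R) * t ^ (n - j) =
      (n.choose j : R) * t ^ (n - j) + t * ((n.choose (j + 1) : R) * t ^ (n - (j + 1))) := by
  rw [Nat.choose_succ_succ]
  by_cases h : j + 1 ≤ n
  · have e4 : n - j = (n - (j + 1)) + 1 := by omega
    rw [e4]
    push_cast
    ring
  · rw [Nat.choose_eq_zero_of_lt (show n < j + 1 by omega)]
    push_cast
    ring

theorem auxB_succ {R : Type*} [CommRing R] (t d : R) (n : ℕ) :
    auxB t d (n + 1) = auxA t d n + t * auxB t d n := by
  rw [auxB_ext t d (n + 1) (n + 2) (by omega), auxB_ext t d n (n + 2) (by omega),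
    auxA_ext t d n (n + 2) (by omega), Finset.mul_sum, ← Finset.sum_add_distrib]
  apply Finset.sum_congr rfl
  intro q _
  rw [Nat.add_sub_add_right, aux_choose_mul]
  ring

theorem auxA_succ {R : Type*} [CommRing R] (t d : R) (n : ℕ) :
    auxA t d (n + 1) = t * auxA t d n + d * auxB t d n := by
  rw [auxA_ext t d (n + 1) (n + 2 + 1) (by omega), auxB_ext t d n (n + 2) (by omega),
    auxA_ext t d n (n + 2 + 1) (by omega), Finset.sum_range_succ' _ (n + 2), Finset.sum_range_succ' _ (n + 2),
    mul_add t, Finset.mul_sum, Finset.mul_sum, add_right_comm, ← Finset.sum_add_distrib]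
  congr 1
  · apply Finset.sum_congr rfl
    intro q _
    have e : 2 * (q + 1) = 2 * q + 1 + 1 := by ring
    rw [e, Nat.add_sub_add_right, aux_choose_mul]
    ring
  · simp
    ring

theorem auxA_rec {R : Type*} [CommRing R] (t d : R) (n : ℕ) :
    auxA t d (n + 2) = 2 * t * auxA t d (n + 1) + (d - t ^ 2) * auxA t d n := by
  rw [auxA_succ t d (n + 1), auxB_succ, auxA_succ]
  ring

theorem auxA_eq {R : Type*} [CommRing R] (s t : R) (n : ℕ) :
    2 * auxA t (t ^ 2 - 4 * s) (n + 2) =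
      (-2) ^ (n + 2) * (auxG (-t) (-s) (n + 2) + (-s) * auxG (-t) (-s) n) := by
  have A0 : auxA t (t ^ 2 - 4 * s) 0 = 1 := by simp [auxA]
  have A1 : auxA t (t ^ 2 - 4 * s) 1 = t := by simp [auxA]
  have G0 : auxG (-t) (-s) 0 = 1 := by simp [auxG]
  have G1 : auxG (-t) (-s) 1 = -t := by simp [auxG]
  induction n using Nat.strong_induction_on with
  | _ n ih =>
    match n with
    | 0 =>
      rw [auxA_rec, auxG_rec, zero_add, A0, A1, G0, G1]
      ring
    | 1 =>
      rw [auxA_rec, auxG_rec, auxA_rec, zero_add, auxG_rec, zero_add, A0, A1, G0, G1]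
      ring
    | m + 2 =>
      have h1 := ih (m + 1) (by omega)
      have h0 := ih m (by omega)
      rw [auxA_rec, auxG_rec _ _ (m + 2)]
      have r1 := auxG_rec (-t) (-s) (m + 1)
      have r0 := auxG_rec (-t) (-s) m
      rw [show m + 1 + 2 = m + 2 + 1 by ring] at h1 r1
      linear_combination (2 * t) * h1 - 4 * s * h0 - (-2) ^ (m + 4) * (-s) * r0

theorem f_eq (n : ℕ) :
    C ((n : ℚ) + 2) * f (n + 2) = -(auxG (-t) (-s) (n + 2) + (-s) * auxG (-t) (-s) n) := by
  have hn : (n : ℚ) + 2 ≠ 0 := by positivity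
  have e : (n + 2) / 2 + 1 = n / 2 + 1 + 1 := by omega
  rw [f, e, auxG_ext (-t) (-s) (n + 2) (n / 2 + 1 + 1) (by omega), auxG,
    Finset.sum_range_succ' _ (n / 2 + 1), Finset.sum_range_succ' _ (n / 2 + 1), mul_add (C _), Finset.mul_sum, Finset.mul_sum,
    add_right_comm, ← Finset.sum_add_distrib, neg_add, ← Finset.sum_neg_distrib]
  congr 1
  · apply Finset.sum_congr rfl
    intro a ha
    simp only [Finset.mem_range] at ha
    obtain ⟨b, rfl⟩ : ∃ b, n = 2 * a + b := ⟨n - 2 * a, by omega⟩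
    have e1 : 2 * a + b + 2 - (a + 1) = (a + b) + 1 := by omega
    have e2 : 2 * a + b - a = a + b := by omega
    have e3 : 2 * a + b + 2 - 2 * (a + 1) = b := by omega
    have e4 : 2 * a + b - 2 * a = b := by omega
    rw [e1, e2, e3, e4, Nat.add_sub_cancel]
    have hc : (((2 * a + b : ℕ) : ℚ) + 2) * ((-1) ^ (a + b) /
        (((2 * a + b + 2 : ℕ) : ℚ) - ((a + 1 : ℕ) : ℚ)) * ((a + b + 1).choose (a + 1) : ℚ)) =
        (-1) ^ (a + b) * (((a + b + 1).choose (a + 1) : ℚ) + ((a + b).choose a : ℚ)) := by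
      have h := Nat.add_one_mul_choose_eq (a + b) a
      have h' : ((a : ℚ) + b + 1) * ((a + b).choose a : ℚ) =
          ((a + b + 1).choose (a + 1) : ℚ) * (a + 1) := by exact_mod_cast h
      have hd : ((2 * a + b + 2 : ℕ) : ℚ) - ((a + 1 : ℕ) : ℚ) = (a : ℚ) + b + 1 := by
        push_cast; ring
      rw [hd]
      have h0 : (a : ℚ) + b + 1 ≠ 0 := by positivity
      field_simp
      push_cast
      linear_combination -h'
    rw [← mul_assoc, ← mul_assoc, ← C_mul, hc]
    simp only [map_mul, map_add, map_pow, map_neg, map_one, map_natCast]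
    rw [neg_pow s, neg_pow s, neg_pow t]
    ring
  · rw [← mul_assoc, ← mul_assoc, ← C_mul]
    have hc : ((n : ℚ) + 2) * ((-1) ^ (n + 2 - 0 - 1) / (((n + 2 : ℕ) : ℚ) - ((0 : ℕ) : ℚ)) *
        ((n + 2 - 0).choose 0 : ℚ)) = - (-1) ^ (n + 2) := by
      rw [show n + 2 - 0 - 1 = n + 1 by omega]
      push_cast
      simp
      field_simp
      ring
    rw [hc]
    simp only [map_pow, map_neg, map_one]
    rw [neg_pow t]
    simp

theorem stmt1 (k : ℕ) (hk : 1 ≤ k) :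
    f k = C (1 / ((k : ℚ) * (-2 : ℚ) ^ (k - 1))) *
      ∑ q ∈ Finset.range (k / 2 + 1),
        C ((-1 : ℚ) ^ q * (k.choose (2 * q) : ℚ)) * t ^ (k - 2 * q) * u ^ q := by
  have hS : ∑ q ∈ Finset.range (k / 2 + 1),
        C ((-1 : ℚ) ^ q * (k.choose (2 * q) : ℚ)) * t ^ (k - 2 * q) * u ^ q =
      auxA t (t ^ 2 - 4 * s) k := by
    unfold auxA
    apply Finset.sum_congr rfl
    intro q _
    have hu : t ^ 2 - 4 * s = -u := by
      have : (C 4 : MvPolynomial (Fin 2) ℚ) = 4 := map_ofNat C 4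
      rw [u, this]; ring
    rw [hu, neg_pow u]
    simp only [map_mul, map_pow, map_neg, map_one, map_natCast]
    ring
  rw [hS]
  match k, hk with
  | 1, _ => simp [f, auxA]
  | n + 2, _ =>
    have h1 := f_eq n
    have h2 := auxA_eq s t n
    have hn : (n : ℚ) + 2 ≠ 0 := by positivity
    have h3 : C ((-2 : ℚ) ^ (n + 2)) * (C ((n : ℚ) + 2) * f (n + 2)) =
        C (-2) * auxA t (t ^ 2 - 4 * s) (n + 2) := by
      have c2 : (C (2 : ℚ) : MvPolynomial (Fin 2) ℚ) = 2 := map_ofNat C 2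
      rw [h1, C_pow, C_neg, c2]
      linear_combination h2
    have h4 : f (n + 2) = C (1 / ((-2 : ℚ) ^ (n + 2) * ((n : ℚ) + 2))) *
        (C ((-2 : ℚ) ^ (n + 2)) * (C ((n : ℚ) + 2) * f (n + 2))) := by
      rw [← mul_assoc, ← mul_assoc, mul_assoc (C _) (C _) (C _), ← C_mul, ← C_mul,
        one_div_mul_cancel (by positivity), C_1, one_mul]
    rw [h4, h3, ← mul_assoc, ← C_mul]
    congr 2
    rw [show n + 2 - 1 = n + 1 by omega]
    push_cast
    rw [pow_succ _ (n + 1)]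
    field_simp
end

section
/- For every integer k ≥ 1, ι(G_{2k}) = (−1)^k·G_{2k} in ℚ[t,v]. -/
open MvPolynomial

/-- In `ℚ[t,v]` (with `t = X 0`, `v = X 1`), `G k` is obtained from `f k` by substituting
`s = (t² + v²)/4` and keeping `t`. -/
noncomputable def G (k : ℕ) : MvPolynomial (Fin 2) ℚ :=
  aeval ![C (1/4 : ℚ) * ((X 0) ^ 2 + (X 1) ^ 2), X 0] (f k)

/-- The `ℚ`-algebra endomorphism `ι` of `ℚ[t,v]` with `ι t = -v`, `ι v = t`. -/
noncomputable def iota : MvPolynomial (Fin 2) ℚ →ₐ[ℚ] MvPolynomial (Fin 2) ℚ :=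
  aeval ![-(X 1), X 0]

/-- Generalized Fibonacci polynomials as explicit sums. -/
noncomputable def auxE {R : Type*} [CommRing R] (x y : R) (m : ℕ) : R :=
  ∑ p ∈ Finset.HasAntidiagonal.antidiagonal m, (p.2.choose p.1 : R) * (-x) ^ p.1 * y ^ (p.2 - p.1)

theorem auxE_rec {R : Type*} [CommRing R] (x y : R) (m : ℕ) :
    auxE x y (m + 2) = y * auxE x y (m + 1) - x * auxE x y m := by
  have h1 : ∀ a b : ℕ, ((b + 1).choose (a + 1) : R) * (-x) ^ (a + 1) * y ^ (b + 1 - (a + 1))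
      = y * ((b.choose (a + 1) : R) * (-x) ^ (a + 1) * y ^ (b - (a + 1)))
        - x * ((b.choose a : R) * (-x) ^ a * y ^ (b - a)) := by
    intro a b
    rw [Nat.choose_succ_succ, Nat.add_sub_add_right]
    rcases Nat.lt_or_ge b (a + 1) with h | h
    · rw [Nat.choose_eq_zero_of_lt h]
      push_cast
      ring
    · obtain ⟨c, rfl⟩ := Nat.exists_eq_add_of_le h
      have e1 : a + 1 + c - a = c + 1 := by omega
      have e2 : a + 1 + c - (a + 1) = c := by omega
      rw [e1, e2]
      push_cast
      ring
  unfold auxE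
  rw [Finset.Nat.antidiagonal_succ_succ', Finset.Nat.antidiagonal_succ (n := m)]
  have h2 := Finset.sum_congr (rfl : Finset.HasAntidiagonal.antidiagonal m = _)
    (fun p _ => h1 p.1 p.2)
  rw [Finset.sum_sub_distrib, ← Finset.mul_sum, ← Finset.mul_sum] at h2
  simp only [Nat.add_sub_add_right] at h2
  simp only [Finset.sum_cons, Finset.sum_map, mul_add]
  simp
  rw [h2]
  ring

theorem auxE_range {R : Type*} [CommRing R] (x y : R) (m N : ℕ) (hN : m / 2 + 1 ≤ N) :
    auxE x y m = ∑ a ∈ Finset.range N,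
      ((m - a).choose a : R) * (-x) ^ a * y ^ (m - a - a) := by
  have key : ∀ M, m / 2 + 1 ≤ M → ∑ a ∈ Finset.range M,
      ((m - a).choose a : R) * (-x) ^ a * y ^ (m - a - a) =
      ∑ a ∈ Finset.range (m / 2 + 1),
      ((m - a).choose a : R) * (-x) ^ a * y ^ (m - a - a) := by
    intro M hM
    symm
    apply Finset.sum_subset
    · intro a ha
      simp only [Finset.mem_range] at *
      omega
    · intro a _ ha
      simp only [Finset.mem_range] at ha
      rw [Nat.choose_eq_zero_of_lt (by omega)]
      simp
  unfold auxE
  rw [Finset.Nat.sum_antidiagonal_eq_sum_range_succ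
    (fun i j => (j.choose i : R) * (-x) ^ i * y ^ (j - i)), key N hN, key _ (by omega)]

theorem auxCoeff (m a : ℕ) (h : 2 * a ≤ m + 1) :
    ((m + 1 : ℕ) : ℚ) * (((-1 : ℚ) ^ (m + 1 - a - 1) / (((m + 1 : ℕ) : ℚ) - a)) *
      ((m + 1 - a).choose a : ℚ)) =
    (-1) ^ m * ((-1) ^ a * (2 * ((m + 1 - a).choose a : ℚ) - ((m - a).choose a : ℚ))) := by
  have ham : a ≤ m := by omega
  obtain ⟨n, rfl⟩ := Nat.exists_eq_add_of_le ham
  have e1 : a + n + 1 - a = n + 1 := by omega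
  have e2 : a + n - a = n := by omega
  rw [e1, e2, Nat.add_sub_cancel]
  have hc := Nat.choose_mul_succ_eq n a
  have hc' : (n.choose a : ℚ) * (n + 1) = ((n + 1).choose a : ℚ) * (n + 1 - a) := by
    have := congrArg (Nat.cast : ℕ → ℚ) hc
    rw [Nat.cast_mul, Nat.cast_mul, Nat.cast_sub (by omega)] at this
    push_cast at this
    exact this
  have hn : (n : ℚ) + 1 ≠ 0 := by positivity
  have e3 : ((a + n + 1 : ℕ) : ℚ) - a = n + 1 := by push_cast; ring
  rw [e3]
  have hs : (-1 : ℚ) ^ (a + n) * (-1) ^ a = (-1) ^ n := by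
    rw [pow_add, mul_right_comm, ← mul_pow]; simp
  rw [← mul_assoc ((-1 : ℚ) ^ (a + n)), hs]
  have : (n.choose a : ℚ) = ((n + 1).choose a : ℚ) * (n + 1 - a) / (n + 1) := by
    rw [← hc']; field_simp
  rw [this]
  push_cast
  field_simp
  ring

theorem G_eq (m : ℕ) : C ((m + 1 : ℕ) : ℚ) * G (m + 1) = C ((-1 : ℚ) ^ m) *
    (2 * auxE (C (1/4 : ℚ) * ((X 0) ^ 2 + (X 1) ^ 2)) (X 0) (m + 1) -
      X 0 * auxE (C (1/4 : ℚ) * ((X 0) ^ 2 + (X 1) ^ 2)) (X 0) m) := by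
  unfold G f s t
  generalize hx : (C (1/4 : ℚ) * ((X 0) ^ 2 + (X 1) ^ 2) : MvPolynomial (Fin 2) ℚ) = x
  rw [auxE_range x _ (m + 1) _ le_rfl, auxE_range x _ m ((m + 1) / 2 + 1) (by omega)]
  rw [map_sum, Finset.mul_sum, Finset.mul_sum, Finset.mul_sum, ← Finset.sum_sub_distrib,
    Finset.mul_sum]
  apply Finset.sum_congr rfl
  intro a ha
  have ha' : 2 * a ≤ m + 1 := by
    simp only [Finset.mem_range] at ha
    omega
  rw [map_mul (aeval _), map_mul (aeval _), map_pow (aeval _), map_pow (aeval _), aeval_X, aeval_X]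
  simp only [Matrix.cons_val_zero, Matrix.cons_val_one]
  rw [aeval_C, algebraMap_eq, ← mul_assoc, ← mul_assoc, ← C_mul, auxCoeff m a ha']
  have e1 : m + 1 - a - a = m + 1 - 2 * a := by omega
  rw [e1]
  have e2 : (X 0 : MvPolynomial (Fin 2) ℚ) *
      (((m - a).choose a : MvPolynomial (Fin 2) ℚ) * (-x) ^ a * X 0 ^ (m - a - a)) =
      ((m - a).choose a : MvPolynomial (Fin 2) ℚ) * (-x) ^ a * X 0 ^ (m + 1 - 2 * a) := by
    rcases Nat.lt_or_ge (m - a) a with h | h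
    · rw [Nat.choose_eq_zero_of_lt h]; simp
    · have : m + 1 - 2 * a = (m - a - a) + 1 := by omega
      rw [this]; ring
  rw [e2, neg_pow x a]
  simp only [map_mul, map_sub, map_pow, map_neg, map_one, map_natCast, map_ofNat]
  ring

/-- The power sum in terms of `auxE`. -/
noncomputable def auxP (k : ℕ) : MvPolynomial (Fin 2) ℚ :=
  2 * auxE (C (1/4 : ℚ) * ((X 0) ^ 2 + (X 1) ^ 2)) (X 0) (k + 1) -
      X 0 * auxE (C (1/4 : ℚ) * ((X 0) ^ 2 + (X 1) ^ 2)) (X 0) k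

theorem auxP_rec (k : ℕ) : auxP (k + 4) = C (1/2 : ℚ) * (X 0 ^ 2 - X 1 ^ 2) * auxP (k + 2) -
    (C (1/4 : ℚ) * ((X 0) ^ 2 + (X 1) ^ 2)) ^ 2 * auxP k := by
  unfold auxP
  have h2 : (C (1/2 : ℚ) * (X 0 ^ 2 - X 1 ^ 2) : MvPolynomial (Fin 2) ℚ) =
      X 0 ^ 2 - 2 * (C (1/4 : ℚ) * ((X 0) ^ 2 + (X 1) ^ 2)) := by
    have c1 : (2 : MvPolynomial (Fin 2) ℚ) * C (1/4 : ℚ) = C (1/2 : ℚ) := by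
      rw [← map_ofNat C 2, ← C_mul]; norm_num
    have c2 : (2 : MvPolynomial (Fin 2) ℚ) * C (1/2 : ℚ) = 1 := by
      rw [← map_ofNat C 2, ← C_mul]; norm_num
    linear_combination (X 0 ^ 2 : MvPolynomial (Fin 2) ℚ) * c2 + (X 0 ^ 2 + X 1 ^ 2) * c1
  rw [h2]
  generalize (C (1/4 : ℚ) * ((X 0) ^ 2 + (X 1) ^ 2) : MvPolynomial (Fin 2) ℚ) = x
  simp only [show k + 4 + 1 = (k + 3) + 2 from rfl, show k + 4 = (k + 2) + 2 from rfl,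
    show k + 3 = (k + 1) + 2 from rfl,
    auxE_rec]
  ring

theorem iota_auxP (k : ℕ) : iota (auxP (2 * k + 1)) = (-1) ^ (k + 1) * auxP (2 * k + 1) := by
  have hC : ∀ q : ℚ, iota (C q) = C q := fun q => by
    unfold iota; rw [aeval_C, algebraMap_eq]
  have h0 : iota (X 0) = -(X 1) := by simp [iota]
  have h1 : iota (X 1) = X 0 := by simp [iota]
  have e0 : ∀ x y : MvPolynomial (Fin 2) ℚ, auxE x y 0 = 1 := by intro x y; simp [auxE]
  have e1 : ∀ x y : MvPolynomial (Fin 2) ℚ, auxE x y 1 = y := by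
    intro x y; simp [auxE, Finset.Nat.antidiagonal_succ]
  have p1 : auxP 1 = C (1/2 : ℚ) * (X 0 ^ 2 - X 1 ^ 2) := by
    have c1 : (2 : MvPolynomial (Fin 2) ℚ) * C (1/4 : ℚ) = C (1/2 : ℚ) := by
      rw [← map_ofNat C 2, ← C_mul]; norm_num
    have c2 : (2 : MvPolynomial (Fin 2) ℚ) * C (1/2 : ℚ) = 1 := by
      rw [← map_ofNat C 2, ← C_mul]; norm_num
    unfold auxP
    rw [show 1 + 1 = 0 + 2 from rfl, auxE_rec, zero_add, e0, e1]
    linear_combination (-(X 0 ^ 2 : MvPolynomial (Fin 2) ℚ)) * c2 - (X 0 ^ 2 + X 1 ^ 2) * c1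
  have p3 : auxP 3 = auxP 1 ^ 2 - 2 * (C (1/4 : ℚ) * ((X 0) ^ 2 + (X 1) ^ 2)) ^ 2 := by
    unfold auxP
    generalize (C (1/4 : ℚ) * ((X 0) ^ 2 + (X 1) ^ 2) : MvPolynomial (Fin 2) ℚ) = x
    have e2 := auxE_rec x (X 0) 0
    have e3 := auxE_rec x (X 0) 1
    have e4 := auxE_rec x (X 0) 2
    simp only [Nat.reduceAdd, e0, e1] at e2 e3 e4 ⊢
    rw [e4, e3, e2]
    ring
  induction k using Nat.twoStepInduction with
  | zero =>
    simp only [mul_zero, zero_add, p1, map_mul, map_sub, map_pow, hC, h0, h1]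
    ring
  | one =>
    simp only [mul_one, show 2 + 1 = 3 from rfl, p3, p1, map_mul, map_sub, map_add, map_pow, hC,
      h0, h1, map_ofNat]
    ring
  | more k ih1 ih2 =>
    have e : 2 * (k + 2) + 1 = (2 * k + 1) + 4 := by ring
    have e' : 2 * (k + 1) + 1 = (2 * k + 1) + 2 := by ring
    rw [e'] at ih2
    rw [e, auxP_rec]
    simp only [map_mul, map_sub, map_add, map_pow, hC, h0, h1, ih1, ih2]
    ring

theorem stmt2 (k : ℕ) (hk : 1 ≤ k) :
    iota (G (2 * k)) = C ((-1 : ℚ) ^ k) * G (2 * k) := by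
  obtain ⟨n, rfl⟩ := Nat.exists_eq_add_of_le' hk
  have hC : ∀ q : ℚ, iota (C q) = C q := fun q => by
    unfold iota; rw [aeval_C, algebraMap_eq]
  have h := G_eq (2 * n + 1)
  rw [show 2 * n + 1 + 1 = 2 * (n + 1) by ring] at h
  have hP : 2 * auxE (C (1/4 : ℚ) * ((X 0) ^ 2 + (X 1) ^ 2)) (X 0) (2 * (n + 1)) -
      X 0 * auxE (C (1/4 : ℚ) * ((X 0) ^ 2 + (X 1) ^ 2)) (X 0) (2 * n + 1)
      = auxP (2 * n + 1) := rfl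
  rw [hP] at h
  have h' := congrArg iota h
  rw [map_mul, map_mul, hC, hC, iota_auxP] at h'
  have hne : (C ((2 * (n + 1) : ℕ) : ℚ) : MvPolynomial (Fin 2) ℚ) ≠ 0 := by
    rw [Ne, C_eq_zero]
    positivity
  apply mul_left_cancel₀ hne
  rw [h', mul_left_comm (C ((2 * (n + 1) : ℕ) : ℚ)), h]
  simp only [map_pow, map_neg, map_one]
  ring
end

section
/- Let p ≥ 1 and let f = Σ_{q=0}^{p} a_q·σ_{p,q} be a real linear combination of the elementary symmetric polynomials in x_1,…,x_p. Then f(x) ≥ 0 for all x in the cube [0,1]^p if and only if f(v) ≥ 0 for every vertex v ∈ {0,1}^p of the cube. -/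
open MvPolynomial

lemma prod_affine {p : ℕ} (s : Finset (Fin p)) (x : Fin p → ℝ) (i : Fin p) :
    ∏ j ∈ s, x j = (1 - x i) * ∏ j ∈ s, Function.update x i 0 j
      + x i * ∏ j ∈ s, Function.update x i 1 j := by
  by_cases h : i ∈ s
  · rw [Finset.prod_update_of_mem h, Finset.prod_update_of_mem h,
      ← Finset.mul_prod_erase s x h, Finset.sdiff_singleton_eq_erase]
    ring
  · rw [Finset.prod_update_of_notMem h, Finset.prod_update_of_notMem h]
    ring

lemma sum_affine {p : ℕ} (a : ℕ → ℝ) (x : Fin p → ℝ) (i : Fin p) :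
    ∑ q ∈ Finset.range (p + 1), a q * eval x (esymm (Fin p) ℝ q) =
      (1 - x i) * ∑ q ∈ Finset.range (p + 1),
          a q * eval (Function.update x i 0) (esymm (Fin p) ℝ q)
      + x i * ∑ q ∈ Finset.range (p + 1),
          a q * eval (Function.update x i 1) (esymm (Fin p) ℝ q) := by
  rw [Finset.mul_sum, Finset.mul_sum, ← Finset.sum_add_distrib]
  refine Finset.sum_congr rfl fun q _ => ?_
  have h : eval x (esymm (Fin p) ℝ q) =
      (1 - x i) * eval (Function.update x i 0) (esymm (Fin p) ℝ q)
      + x i * eval (Function.update x i 1) (esymm (Fin p) ℝ q) := by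
    simp only [esymm, map_sum, map_prod, eval_X]
    rw [Finset.mul_sum, Finset.mul_sum, ← Finset.sum_add_distrib]
    exact Finset.sum_congr rfl fun s _ => prod_affine s x i
  rw [h]
  ring

theorem stmt5 (p : ℕ) (hp : 1 ≤ p) (a : ℕ → ℝ) :
    (∀ x : Fin p → ℝ, (∀ i, 0 ≤ x i ∧ x i ≤ 1) →
        0 ≤ ∑ q ∈ Finset.range (p + 1), a q * eval x (esymm (Fin p) ℝ q)) ↔
      (∀ v : Fin p → ℝ, (∀ i, v i = 0 ∨ v i = 1) →
        0 ≤ ∑ q ∈ Finset.range (p + 1), a q * eval v (esymm (Fin p) ℝ q)) := by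
  constructor
  · intro h v hv
    refine h v fun i => ?_
    rcases hv i with h | h <;> rw [h] <;> norm_num
  · intro h
    have key : ∀ s : Finset (Fin p), ∀ x : Fin p → ℝ, (∀ i, 0 ≤ x i ∧ x i ≤ 1) →
        (∀ i, i ∉ s → x i = 0 ∨ x i = 1) →
        0 ≤ ∑ q ∈ Finset.range (p + 1), a q * eval x (esymm (Fin p) ℝ q) := by
      intro s
      induction s using Finset.induction_on with
      | empty => exact fun x _ hx => h x fun i => hx i (Finset.notMem_empty i)
      | insert i s his ih =>
        intro x hx hs
        have upd : ∀ t : ℝ, t = 0 ∨ t = 1 → 0 ≤ ∑ q ∈ Finset.range (p + 1),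
            a q * eval (Function.update x i t) (esymm (Fin p) ℝ q) := by
          intro t ht
          apply ih
          · intro j
            by_cases hj : j = i
            · subst hj
              rcases ht with rfl | rfl <;> simp
            · simpa [Function.update_of_ne hj] using hx j
          · intro j hjs
            by_cases hj : j = i
            · subst hj
              simpa using ht
            · rw [Function.update_of_ne hj]
              exact hs j (by simp [hj, hjs])
        rw [sum_affine a x i]
        exact add_nonneg (mul_nonneg (by linarith [(hx i).2]) (upd 0 (Or.inl rfl)))
          (mul_nonneg (hx i).1 (upd 1 (Or.inr rfl)))
    exact fun x hx => key Finset.univ x hx fun i hi => absurd (Finset.mem_univ i) hi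
end

section
/- The linear maps L, Λ, H on M satisfy the commutation relations L∘Λ − Λ∘L = H, H∘L − L∘H = 2L, and H∘Λ − Λ∘H = −2Λ; consequently, sending the standard sl(2,ℝ)-generators X, Y, H (with [X,Y] = H, [H,X] = 2X, [H,Y] = −2Y) to L, Λ, H respectively defines a representation of sl(2,ℝ) on M. -/
/-- Valid basis indices: pairs `(k,p)` of integers with `0 ≤ p` and `2p ≤ k`. -/
def Idx : Type := { x : ℤ × ℤ // 0 ≤ x.2 ∧ 2 * x.2 ≤ x.1 }

/-- The free real vector space on the basis `{e_{k,p} : 0 ≤ 2p ≤ k}`. -/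
abbrev M : Type := Idx →₀ ℝ

/-- The basis vector `e_{k,p}`, with the convention that it is `0` for invalid indices. -/
noncomputable def e (k p : ℤ) : M :=
  if h : 0 ≤ p ∧ 2 * p ≤ k then Finsupp.single ⟨(k, p), h⟩ 1 else 0

/-- `L e_{k,p} = (k - 2p + 1) e_{k+1,p}`. -/
noncomputable def opL : M →ₗ[ℝ] M :=
  Finsupp.lsum ℝ fun v => LinearMap.toSpanSingleton ℝ M
    (((v.1.1 - 2 * v.1.2 + 1 : ℤ) : ℝ) • e (v.1.1 + 1) v.1.2)

/-- `Λ e_{k,p} = (2n - 2p - k + 1) e_{k-1,p} + (k - 2p + 1) e_{k-1,p-1}`. -/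
noncomputable def opLam (n : ℕ) : M →ₗ[ℝ] M :=
  Finsupp.lsum ℝ fun v => LinearMap.toSpanSingleton ℝ M
    ((((2 * (n : ℤ) - 2 * v.1.2 - v.1.1 + 1 : ℤ) : ℝ)) • e (v.1.1 - 1) v.1.2 +
      (((v.1.1 - 2 * v.1.2 + 1 : ℤ) : ℝ)) • e (v.1.1 - 1) (v.1.2 - 1))

/-- `H e_{k,p} = (2k - 2n) e_{k,p}`. -/
noncomputable def opH (n : ℕ) : M →ₗ[ℝ] M :=
  Finsupp.lsum ℝ fun v => LinearMap.toSpanSingleton ℝ M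
    (((2 * v.1.1 - 2 * (n : ℤ) : ℤ) : ℝ) • e v.1.1 v.1.2)

theorem e_of_not {k p : ℤ} (h : ¬ (0 ≤ p ∧ 2 * p ≤ k)) : e k p = 0 := dif_neg h

theorem e_idx (v : Idx) : e v.1.1 v.1.2 = Finsupp.single v 1 := dif_pos v.2

theorem lsum_aux (f : Idx → M) (v : Idx) :
    (Finsupp.lsum ℝ fun v => LinearMap.toSpanSingleton ℝ M (f v) : M →ₗ[ℝ] M)
      (Finsupp.single v 1) = f v := by
  rw [Finsupp.lsum_single, LinearMap.toSpanSingleton_apply, one_smul]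

theorem opL_e (k p : ℤ) : opL (e k p) = ((k : ℝ) - 2 * p + 1) • e (k + 1) p := by
  by_cases h : 0 ≤ p ∧ 2 * p ≤ k
  · rw [e_idx ⟨(k, p), h⟩]
    refine (lsum_aux _ _).trans ?_
    push_cast
    rfl
  · rw [e_of_not h, map_zero]
    by_cases h' : 0 ≤ p ∧ 2 * p ≤ k + 1
    · have hk : k = 2 * p - 1 := by omega
      subst hk
      push_cast
      rw [show (2 * (p : ℝ) - 1 - 2 * p + 1) = 0 by ring, zero_smul]
    · rw [e_of_not h', smul_zero]

theorem opH_e (n : ℕ) (k p : ℤ) : opH n (e k p) = (2 * (k : ℝ) - 2 * n) • e k p := by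
  by_cases h : 0 ≤ p ∧ 2 * p ≤ k
  · have := e_idx ⟨(k, p), h⟩
    conv_lhs => rw [this]
    refine (lsum_aux _ _).trans ?_
    push_cast
    rfl
  · rw [e_of_not h, map_zero, smul_zero]

theorem opLam_e (n : ℕ) (k p : ℤ) (h : 0 ≤ p ∧ 2 * p ≤ k) :
    opLam n (e k p) = (2 * (n : ℝ) - 2 * p - k + 1) • e (k - 1) p +
      ((k : ℝ) - 2 * p + 1) • e (k - 1) (p - 1) := by
  rw [e_idx ⟨(k, p), h⟩]
  refine (lsum_aux _ _).trans ?_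
  push_cast
  rfl

theorem ext_e {f g : M →ₗ[ℝ] M}
    (h : ∀ k p : ℤ, 0 ≤ p ∧ 2 * p ≤ k → f (e k p) = g (e k p)) : f = g := by
  refine Finsupp.lhom_ext' fun v => LinearMap.ext_ring ?_
  have := h v.1.1 v.1.2 v.2
  rw [e_idx] at this
  exact this

/-- The maps `L`, `Λ`, `H` satisfy the `sl₂(ℝ)` commutation relations `[L,Λ] = H`,
`[H,L] = 2L`, `[H,Λ] = -2Λ`; hence `X ↦ L`, `Y ↦ Λ`, `H ↦ H` defines a representation
of `sl(2,ℝ)` on `M`. -/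
theorem stmt11 (n : ℕ) :
    opL ∘ₗ opLam n - opLam n ∘ₗ opL = opH n ∧
    opH n ∘ₗ opL - opL ∘ₗ opH n = (2 : ℝ) • opL ∧
    opH n ∘ₗ opLam n - opLam n ∘ₗ opH n = (-2 : ℝ) • opLam n := by
  refine ⟨ext_e fun k p h => ?_, ext_e fun k p h => ?_, ext_e fun k p h => ?_⟩
  · have h' : 0 ≤ p ∧ 2 * p ≤ k + 1 := by omega
    simp only [LinearMap.sub_apply, LinearMap.comp_apply, opL_e, opH_e, opLam_e n k p h,
      opLam_e n (k + 1) p h', map_add, map_smul, sub_add_cancel, add_sub_cancel_right]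
    push_cast
    module
  · simp only [LinearMap.sub_apply, LinearMap.comp_apply, LinearMap.smul_apply, opL_e, opH_e,
      map_smul]
    push_cast
    module
  · simp only [LinearMap.sub_apply, LinearMap.comp_apply, LinearMap.smul_apply, opH_e,
      opLam_e n k p h, map_add, map_smul]
    push_cast
    module
end
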